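/- Let φ: S_{m−1} → S_m be defined by φ(π_1π_2⋯π_{m−1}) = (π_1+1)(π_2+1)⋯(π_{m−1}+1)·1. For every n ≥ 4, the set S_n(123;312) of permutations of {1,…,n} avoiding 123 and containing 312 exactly once equals {φ(π) : π ∈ S_{n−1}(123;312)} ∪ {3 1 n (n−1) (n−2) ⋯ 5 4 2, (n−2) (n−3) ⋯ 3 2 n 1 (n−1)}, the two listed words being the permutations 3,1,n,n−1,n−2,…,5,4,2 and n−2,n−3,…,3,2,n,1,n−1. -/

import Mathlib

/-- Number of occurrences of the pattern `α ∈ S_k` in the permutation `π ∈ S_n`: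
the number of strictly increasing choices of `k` indices such that the corresponding
subword of `π` is order-isomorphic to `α`. -/
noncomputable def occCount {k n : ℕ} (α : Equiv.Perm (Fin k)) (π : Equiv.Perm (Fin n)) : ℕ :=
  Nat.card {f : Fin k → Fin n // StrictMono f ∧ ∀ a b : Fin k, α a < α b ↔ π (f a) < π (f b)}

/-- `π` avoids the pattern `α`. -/
def avoids {k n : ℕ} (α : Equiv.Perm (Fin k)) (π : Equiv.Perm (Fin n)) : Prop :=
  occCount α π = 0

/-- `π` contains the pattern `α` exactly once. -/
def containsOnce {k n : ℕ} (α : Equiv.Perm (Fin k)) (π : Equiv.Perm (Fin n)) : Prop :=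
  occCount α π = 1

/-- The pattern `123` (as a permutation of `Fin 3`, 0-indexed). -/
def p123 : Equiv.Perm (Fin 3) := ⟨![0,1,2], ![0,1,2], by decide, by decide⟩
/-- The pattern `132`. -/
def p132 : Equiv.Perm (Fin 3) := ⟨![0,2,1], ![0,2,1], by decide, by decide⟩
/-- The pattern `213`. -/
def p213 : Equiv.Perm (Fin 3) := ⟨![1,0,2], ![1,0,2], by decide, by decide⟩
/-- The pattern `231`. -/
def p231 : Equiv.Perm (Fin 3) := ⟨![1,2,0], ![2,0,1], by decide, by decide⟩
/-- The pattern `312`. -/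
def p312 : Equiv.Perm (Fin 3) := ⟨![2,0,1], ![1,2,0], by decide, by decide⟩
/-- The pattern `321`. -/
def p321 : Equiv.Perm (Fin 3) := ⟨![2,1,0], ![2,1,0], by decide, by decide⟩

/-- `s_n(α;β)`: the number of permutations of `{1,…,n}` that avoid `α` and contain `β`
exactly once. -/
noncomputable def sAvoidContain (α β : Equiv.Perm (Fin 3)) (n : ℕ) : ℕ :=
  Nat.card {π : Equiv.Perm (Fin n) // avoids α π ∧ containsOnce β π}

/-- `s_n(∅;{α,β})`: the number of permutations of `{1,…,n}` that contain each of `α` and `β`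
exactly once. -/
noncomputable def sContainBoth (α β : Equiv.Perm (Fin 3)) (n : ℕ) : ℕ :=
  Nat.card {π : Equiv.Perm (Fin n) // containsOnce α π ∧ containsOnce β π}

/-- `φ : S_m → S_{m+1}` appends a new smallest element at the end:
`φ(π₁…π_m) = (π₁+1)(π₂+1)⋯(π_m+1)·1`. -/
def phi {m : ℕ} (π : Equiv.Perm (Fin m)) : Equiv.Perm (Fin (m + 1)) where
  toFun i := Fin.lastCases 0 (fun j => (π j).succ) i
  invFun v := Fin.cases (Fin.last m) (fun j => (π.symm j).castSucc) v
  left_inv i := by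
    induction i using Fin.lastCases with
    | last => simp
    | cast j => simp
  right_inv v := by
    induction v using Fin.cases with
    | zero => simp
    | succ j => simp

/-- `S_n(α;β)`: the set of permutations of `{1,…,n}` avoiding `α` and containing `β`
exactly once. -/
def SnAvoidContain (α β : Equiv.Perm (Fin 3)) (n : ℕ) : Set (Equiv.Perm (Fin n)) :=
  {π | avoids α π ∧ containsOnce β π}

/-- `S_n(∅;{α,β})`: the set of permutations of `{1,…,n}` containing each of `α` and `β`
exactly once. -/
def SnContainBoth (α β : Equiv.Perm (Fin 3)) (n : ℕ) : Set (Equiv.Perm (Fin n)) :=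
  {π | containsOnce α π ∧ containsOnce β π}

/-- `π` is the permutation whose one-line word (1-indexed positions, values in `{1,…,n}`)
is given by `w`. -/
def hasWord {n : ℕ} (π : Equiv.Perm (Fin n)) (w : ℕ → ℕ) : Prop :=
  ∀ j : Fin n, (π j : ℕ) + 1 = w ((j : ℕ) + 1)

lemma occ_iff {n : ℕ} (α : Equiv.Perm (Fin 3)) (σ : Equiv.Perm (Fin n)) (f : Fin 3 → Fin n) :
    (StrictMono f ∧ ∀ a b : Fin 3, α a < α b ↔ σ (f a) < σ (f b)) ↔
    (f 0 < f 1 ∧ f 1 < f 2 ∧ ∀ a b : Fin 3, α a < α b ↔ σ (f a) < σ (f b)) := by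
  rw [Fin.strictMono_iff_lt_succ]
  constructor
  · rintro ⟨h, h'⟩
    exact ⟨h 0, h 1, h'⟩
  · rintro ⟨h0, h1, h'⟩
    refine ⟨fun i => ?_, h'⟩
    fin_cases i
    · exact h0
    · exact h1

lemma occ123 {n : ℕ} (σ : Equiv.Perm (Fin n)) (f : Fin 3 → Fin n) :
    (StrictMono f ∧ ∀ a b : Fin 3, p123 a < p123 b ↔ σ (f a) < σ (f b)) ↔
    (f 0 < f 1 ∧ f 1 < f 2 ∧ σ (f 0) < σ (f 1) ∧ σ (f 1) < σ (f 2)) := by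
  rw [occ_iff]
  simp only [Fin.forall_fin_succ, p123]
  simp
  grind

lemma occ312 {n : ℕ} (σ : Equiv.Perm (Fin n)) (f : Fin 3 → Fin n) :
    (StrictMono f ∧ ∀ a b : Fin 3, p312 a < p312 b ↔ σ (f a) < σ (f b)) ↔
    (f 0 < f 1 ∧ f 1 < f 2 ∧ σ (f 1) < σ (f 2) ∧ σ (f 2) < σ (f 0)) := by
  rw [occ_iff]
  simp only [Fin.forall_fin_succ, p312]
  simp
  grind

lemma avoids_iff {n : ℕ} (σ : Equiv.Perm (Fin n)) :
    avoids p123 σ ↔ ∀ i j k, i < j → j < k → σ i < σ j → ¬ σ j < σ k := by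
  unfold avoids occCount
  rw [Finite.card_eq_zero_iff, isEmpty_subtype]
  simp only [occ123]
  constructor
  · intro h i j k hij hjk h1 h2
    exact h ![i, j, k] ⟨hij, hjk, h1, h2⟩
  · rintro h f ⟨a, b, c, d⟩
    exact h _ _ _ a b c d

lemma once_iff {n : ℕ} (σ : Equiv.Perm (Fin n)) :
    containsOnce p312 σ ↔ ∃ a b c, a < b ∧ b < c ∧ σ b < σ c ∧ σ c < σ a ∧
      ∀ i j k, i < j → j < k → σ j < σ k → σ k < σ i → i = a ∧ j = b ∧ k = c := by
  unfold containsOnce occCount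
  rw [Nat.card_eq_one_iff_exists]
  constructor
  · rintro ⟨⟨f, h'⟩, hu⟩
    have h := (occ312 σ f).mp h'
    refine ⟨f 0, f 1, f 2, h.1, h.2.1, h.2.2.1, h.2.2.2, ?_⟩
    intro i j k h1 h2 h3 h4
    have := congrArg Subtype.val (hu ⟨![i, j, k], (occ312 σ _).mpr ⟨h1, h2, h3, h4⟩⟩)
    simp only at this
    subst this
    simp
  · rintro ⟨a, b, c, h1, h2, h3, h4, hu⟩
    refine ⟨⟨![a, b, c], (occ312 σ _).mpr ⟨h1, h2, h3, h4⟩⟩, ?_⟩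
    rintro ⟨f, g⟩
    obtain ⟨g1, g2, g3, g4⟩ := (occ312 σ f).mp g
    obtain ⟨e1, e2, e3⟩ := hu _ _ _ g1 g2 g3 g4
    apply Subtype.ext
    funext i
    fin_cases i
    · exact e1
    · exact e2
    · exact e3

lemma eq_of_order {n : ℕ} (σ : Equiv.Perm (Fin n)) (w : Fin n → ℕ) (hw : ∀ i, w i < n)
    (hinj : Function.Injective w) (h : ∀ i j, w i < w j → σ i < σ j) (i : Fin n) :
    (σ i : ℕ) = w i := by
  let f : Fin n → Fin n := fun i => ⟨w i, hw i⟩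
  have hf : Function.Injective f := fun i j hij => hinj (congrArg Fin.val hij)
  let e : Equiv.Perm (Fin n) := Equiv.ofBijective f (Finite.injective_iff_bijective.mp hf)
  have he : ∀ i, e i = f i := fun i => rfl
  have hm : StrictMono (σ ∘ e.symm) := by
    intro x y hxy
    apply h
    have hx : f (e.symm x) = x := by rw [← he]; simp
    have hy : f (e.symm y) = y := by rw [← he]; simp
    have : f (e.symm x) < f (e.symm y) := by rwa [hx, hy]
    exact this
  have hid : ∀ x, (σ ∘ e.symm) x = x := by
    have hs : Function.Surjective (σ ∘ e.symm) := σ.surjective.comp e.symm.surjective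
    let o : Fin n ≃o Fin n := StrictMono.orderIsoOfSurjective _ hm hs
    have ho : o = OrderIso.refl _ := Subsingleton.elim _ _
    intro x
    have : o x = x := by rw [ho]; rfl
    exact this
  have := hid (e i)
  simp only [Function.comp, Equiv.symm_apply_apply] at this
  rw [this]
  rfl

lemma phi_castSucc {m : ℕ} (π : Equiv.Perm (Fin m)) (i : Fin m) :
    phi π i.castSucc = (π i).succ := by
  simp [phi]

lemma phi_last {m : ℕ} (π : Equiv.Perm (Fin m)) : phi π (Fin.last m) = 0 := by
  simp [phi]

lemma phi_mem {m : ℕ} (π : Equiv.Perm (Fin m)) :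
    phi π ∈ SnAvoidContain p123 p312 (m + 1) ↔ π ∈ SnAvoidContain p123 p312 m := by
  simp only [SnAvoidContain, Set.mem_ofPred_eq, avoids_iff, once_iff]
  simp only [Fin.forall_fin_succ', Fin.exists_fin_succ', phi_castSucc, phi_last,
    Fin.castSucc_lt_castSucc_iff, Fin.succ_lt_succ_iff]
  have hl : ∀ i : Fin m, ¬ Fin.last m < i.castSucc := fun i => (Fin.castSucc_lt_last i).not_gt
  simp [Fin.castSucc_lt_last, hl]

lemma exists_phi {m : ℕ} (σ : Equiv.Perm (Fin (m + 1))) (h : σ (Fin.last m) = 0) :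
    ∃ π, phi π = σ := by
  have hne : ∀ i : Fin m, σ i.castSucc ≠ 0 := by
    intro i hi
    have := σ.injective (hi.trans h.symm)
    exact absurd this (Fin.castSucc_lt_last i).ne
  have hinj : Function.Injective (fun i : Fin m => (σ i.castSucc).pred (hne i)) := by
    intro i j hij
    simp only [Fin.pred_inj] at hij
    exact Fin.castSucc_injective _ (σ.injective hij)
  refine ⟨Equiv.ofBijective _ (Finite.injective_iff_bijective.mp hinj), ?_⟩
  ext i
  induction i using Fin.lastCases with
  | last => rw [phi_last, h]
  | cast j => rw [phi_castSucc]; simp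

lemma key {m : ℕ} (hm : 3 ≤ m) (σ : Equiv.Perm (Fin (m + 1)))
    (hσ : σ ∈ SnAvoidContain p123 p312 (m + 1)) (h0 : σ (Fin.last m) ≠ 0) :
    hasWord σ (fun j =>
            if j = 1 then 3 else if j = 2 then 1
            else if j = m + 1 then 2 else m + 4 - j) ∨
    hasWord σ (fun j =>
            if j = m - 1 then m + 1 else if j = m then 1
            else if j = m + 1 then m else m - j) := by
  obtain ⟨hA, hO⟩ := hσ
  rw [avoids_iff] at hA
  rw [once_iff] at hO
  obtain ⟨a, b, c, hab, hbc, h1, h2, hu⟩ := hO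
  obtain ⟨p, hp⟩ := σ.surjective 0
  have hpos : ∀ i, i ≠ p → σ p < σ i := by
    intro i hi
    rw [hp]
    exact Fin.pos_iff_ne_zero.mpr (fun h => hi (σ.injective (h.trans hp.symm)))
  have hinj : ∀ i j, i ≠ j → σ i < σ j ∨ σ j < σ i := fun i j hij =>
    lt_or_gt_of_ne (fun h => hij (σ.injective h))
  have hpl : p < Fin.last m := Fin.lt_last_iff_ne_last.mpr (fun h => h0 (h ▸ hp))
  have hbp : b = p := by
    rcases lt_trichotomy b p with hb | hb | hb
    · rcases lt_trichotomy c p with hc | hc | hc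
      · exfalso
        rcases hinj c (Fin.last m) (hc.trans hpl).ne with h | h
        · exact hA b c _ hbc (hc.trans hpl) h1 h
        · have := hu c p _ hc hpl (hpos _ hpl.ne') h
          exact hb.ne' this.2.1
      · subst hc
        rw [hp] at h1
        exact absurd h1 (Fin.not_lt_zero _)
      · exact (hu a p c (hab.trans hb) hc (hpos _ hc.ne') h2).2.1.symm
    · exact hb
    · exact absurd h1 (hA p b c hb hbc (hpos _ hb.ne'))
  subst hbp
  have hcl : c = Fin.last m := by
    by_contra hc
    have hc' := Fin.lt_last_iff_ne_last.mpr hc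
    have h3 : σ (Fin.last m) < σ c := by
      rcases hinj c (Fin.last m) hc with h | h
      · exact absurd h (hA _ _ _ hbc hc' h1)
      · exact h
    exact hc (hu a b _ hab hpl (hpos _ hpl.ne') (h3.trans h2)).2.2.symm
  have hlt : ∀ i k, i < b → b < k → ¬ (i = a ∧ k = c) → σ i < σ k := by
    intro i k hi hk hn
    rcases hinj i k (hi.trans hk).ne with h | h
    · exact h
    · have := hu i b k hi hk (hpos _ hk.ne') h
      exact absurd ⟨this.1, this.2.2⟩ hn
  have hdec : ∀ i k, b < i → i < k → σ k < σ i := by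
    intro i k hi hk
    rcases hinj i k hk.ne with h | h
    · exact absurd h (hA _ _ _ hi hk (hpos _ hi.ne'))
    · exact h
  have hcv : (c : ℕ) = m := by rw [hcl]; rfl
  by_cases hcase : (b : ℕ) + 1 = m
  · right
    -- nothing in the prefix lies after `a`
    have hmax : ∀ i, i < b → i ≤ a := by
      intro i hi
      by_contra hai
      push Not at hai
      have := hu a i c hai (hi.trans hbc) (hlt i c hi hbc (fun h => hai.ne' h.1)) h2
      exact hi.ne this.2.1
    have hav : (a : ℕ) + 1 = b := by
      by_contra hne
      have h4 := hmax ⟨(b : ℕ) - 1, by omega⟩ (by rw [Fin.lt_def] at *; simp only; omega)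
      rw [Fin.le_def] at h4
      rw [Fin.lt_def] at hab
      simp only at h4
      omega
    have hdec2 : ∀ i j, i < j → j < a → σ j < σ i := by
      intro i j hij hj
      rcases hinj i j hij.ne with h | h
      · have h5 := hlt j c (hj.trans hab) hbc (fun h => hj.ne h.1)
        exact absurd (h5.trans h2) (hA i j a hij hj h)
      · exact h
    have hlta : ∀ i, i < a → σ i < σ c := fun i hi =>
      hlt i c (hi.trans hab) hbc (fun h => hi.ne h.1)
    have := eq_of_order σ (fun j => if (j : ℕ) = m - 2 then m else if (j : ℕ) = m - 1 then 0
            else if (j : ℕ) = m then m - 1 else m - 2 - j) ?_ ?_ ?_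
    · intro j
      have hj := this j
      have := j.isLt
      rw [hj]
      simp only
      split_ifs <;> omega
    · intro i
      have := i.isLt
      try simp only
      split_ifs <;> omega
    · intro i j hij
      have := i.isLt
      have := j.isLt
      simp only at hij
      apply Fin.ext
      split_ifs at hij <;> omega
    · intro i j hij
      have hi := i.isLt
      have hj := j.isLt
      have tri : ∀ x : Fin (m+1), x < a ∨ x = a ∨ x = b ∨ x = c := by
        intro x
        have := x.isLt
        rw [Fin.lt_def, Fin.ext_iff, Fin.ext_iff, Fin.ext_iff]
        omega
      rcases tri i with h | rfl | rfl | rfl <;> rcases tri j with h' | rfl | rfl | rfl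
      · apply hdec2 _ _ _ h
        rw [Fin.lt_def] at *
        try simp only at hij
        split_ifs at hij <;> omega
      · exact (hlta _ h).trans h2
      · exfalso
        try simp only at hij
        split_ifs at hij <;> omega
      · exact hlta _ h
      all_goals first
        | exact h2
        | exact h1
        | exact hpos _ hab.ne
        | exact hpos _ (h'.trans hab).ne
        | (exfalso; simp only [Fin.lt_def] at *; split_ifs at hij <;> omega)
  · left
    have hk : (b : ℕ) + 1 < m := by
      rw [Fin.lt_def] at hbc; omega
    obtain ⟨k, hkv⟩ : ∃ k : Fin (m+1), (k : ℕ) = b + 1 := ⟨⟨b + 1, by omega⟩, rfl⟩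
    have hbk : b < k := by rw [Fin.lt_def]; omega
    have hkc : k ≠ c := by intro h; rw [Fin.ext_iff] at h; omega
    have honly : ∀ i, i < b → i = a := by
      intro i hi
      by_contra hia
      have hic := hlt i c hi hbc (fun h => hia h.1)
      rcases lt_or_gt_of_ne hia with h | h
      · exact hA i a k h (hab.trans hbk) (hic.trans h2) (hlt a k hab hbk (fun h => hkc h.2))
      · exact hi.ne (hu a i c h (hi.trans hbc) hic h2).2.1
    have hbv : (a : ℕ) = 0 ∧ (b : ℕ) = 1 := by
      rw [Fin.lt_def] at hab
      have e0 := honly ⟨0, by omega⟩ (by rw [Fin.lt_def]; simp only; omega)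
      have e1 := honly ⟨b - 1, by omega⟩ (by rw [Fin.lt_def]; simp only; omega)
      rw [Fin.ext_iff] at e0 e1
      simp only at e0 e1
      omega
    obtain ⟨hav, hbv⟩ := hbv
    have := eq_of_order σ (fun j => if (j : ℕ) = 0 then 2 else if (j : ℕ) = 1 then 0
            else if (j : ℕ) = m then 1 else m + 2 - j) ?_ ?_ ?_
    · intro j
      have hj := this j
      have := j.isLt
      rw [hj]
      simp only
      split_ifs <;> omega
    · intro i
      have := i.isLt
      try simp only
      split_ifs <;> omega
    · intro i j hij
      have := i.isLt
      have := j.isLt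
      simp only at hij
      apply Fin.ext
      split_ifs at hij <;> omega
    · intro i j hij
      have hi := i.isLt
      have hj := j.isLt
      have tri : ∀ x : Fin (m+1), (b < x ∧ x < c) ∨ x = a ∨ x = b ∨ x = c := by
        intro x
        have := x.isLt
        rw [Fin.lt_def, Fin.lt_def, Fin.ext_iff, Fin.ext_iff, Fin.ext_iff]
        omega
      rcases tri i with h | rfl | rfl | rfl <;> rcases tri j with h' | rfl | rfl | rfl
      · apply hdec _ _ h'.1
        rw [Fin.lt_def] at *
        try simp only at hij
        split_ifs at hij <;> omega
      all_goals first
        | exact h2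
        | exact h1
        | exact hpos _ hab.ne
        | exact hpos _ h'.1.ne'
        | exact hdec _ _ h'.1 h'.2
        | exact hlt _ _ hab h'.1 (fun h => h'.2.ne h.2)
        | (exfalso; simp only [Fin.lt_def] at *; split_ifs at hij <;> omega)

lemma word1_mem {m : ℕ} (hm : 3 ≤ m) (σ : Equiv.Perm (Fin (m + 1)))
    (h : hasWord σ (fun j =>
            if j = 1 then 3 else if j = 2 then 1
            else if j = m + 1 then 2 else m + 4 - j)) :
    σ ∈ SnAvoidContain p123 p312 (m + 1) := by
  simp only [SnAvoidContain, Set.mem_ofPred_eq, avoids_iff, once_iff]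
  simp only [hasWord] at h
  constructor
  · intro i j k hij hjk h1 h2
    have := h i
    have := h j
    have := h k
    rw [Fin.lt_def] at *
    split_ifs at * <;> omega
  · have e0 := h ⟨0, by omega⟩
    have e1 := h ⟨1, by omega⟩
    have e2 := h ⟨m, by omega⟩
    refine ⟨⟨0, by omega⟩, ⟨1, by omega⟩, ⟨m, by omega⟩, ?_, ?_, ?_, ?_, ?_⟩
    · simp [Fin.lt_def]
    · simp [Fin.lt_def]; omega
    · rw [Fin.lt_def]; simp only at *; split_ifs at * <;> omega
    · rw [Fin.lt_def]; simp only at *; split_ifs at * <;> omega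
    · clear e0 e1 e2
      intro i j k hij hjk h1 h2
      have g1 := h i
      have g2 := h j
      have g3 := h k
      clear h
      rw [Fin.lt_def] at *
      simp only [Fin.ext_iff]
      split_ifs at g1 g2 g3 <;> omega

lemma word2_mem {m : ℕ} (hm : 3 ≤ m) (σ : Equiv.Perm (Fin (m + 1)))
    (h : hasWord σ (fun j =>
            if j = m - 1 then m + 1 else if j = m then 1
            else if j = m + 1 then m else m - j)) :
    σ ∈ SnAvoidContain p123 p312 (m + 1) := by
  simp only [SnAvoidContain, Set.mem_ofPred_eq, avoids_iff, once_iff]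
  simp only [hasWord] at h
  constructor
  · intro i j k hij hjk h1 h2
    have := h i
    have := h j
    have := h k
    rw [Fin.lt_def] at *
    split_ifs at * <;> omega
  · have e0 := h ⟨m - 2, by omega⟩
    have e1 := h ⟨m - 1, by omega⟩
    have e2 := h ⟨m, by omega⟩
    refine ⟨⟨m - 2, by omega⟩, ⟨m - 1, by omega⟩, ⟨m, by omega⟩, ?_, ?_, ?_, ?_, ?_⟩
    · simp [Fin.lt_def]; omega
    · simp [Fin.lt_def]; omega
    · rw [Fin.lt_def]; simp only at *; split_ifs at * <;> omega
    · rw [Fin.lt_def]; simp only at *; split_ifs at * <;> omega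
    · clear e0 e1 e2
      intro i j k hij hjk h1 h2
      have g1 := h i
      have g2 := h j
      have g3 := h k
      clear h
      rw [Fin.lt_def] at *
      simp only [Fin.ext_iff]
      split_ifs at g1 g2 g3 <;> omega

/-- Generating rule for `S_n(123;312)`, `n = m+1 ≥ 4`:
`S_n(123;312) = φ(S_{n−1}(123;312)) ∪ {3 1 n (n−1) ⋯ 5 4 2, (n−2)(n−3) ⋯ 3 2 n 1 (n−1)}`. -/
theorem generating_rule_123_312 :
    ∀ m : ℕ, 4 ≤ m + 1 →
      SnAvoidContain p123 p312 (m + 1) =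
        phi '' SnAvoidContain p123 p312 m ∪
          {σ | hasWord σ (fun j =>
            if j = 1 then 3 else if j = 2 then 1
            else if j = m + 1 then 2 else m + 4 - j)} ∪
          {σ | hasWord σ (fun j =>
            if j = m - 1 then m + 1 else if j = m then 1
            else if j = m + 1 then m else m - j)} := by
  intro m hm
  have hm3 : 3 ≤ m := by omega
  apply Set.Subset.antisymm
  · intro σ hσ
    by_cases h0 : σ (Fin.last m) = 0
    · obtain ⟨π, rfl⟩ := exists_phi σ h0
      exact Or.inl (Or.inl ⟨π, (phi_mem π).mp hσ, rfl⟩)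
    · rcases key hm3 σ hσ h0 with h | h
      · exact Or.inl (Or.inr h)
      · exact Or.inr h
  · rintro σ ((⟨π, hπ, rfl⟩ | h) | h)
    · exact (phi_mem π).mpr hπ
    · exact word1_mem hm3 σ h
    · exact word2_mem hm3 σ h
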